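/- arXiv:2307.01092 — 2 statements merged into one kernel-verified Lean document; each statement's English description precedes it below -/
import Mathlib

section
/- The reduction of f_δ modulo 59 factors in (ℤ/59ℤ)[X] as (X + 39)·h(X), where h(X) = X^15 + 8X^14 + 43X^13 + 23X^12 + 19X^11 + 38X^10 + 9X^9 + 6X^8 + 17X^7 + 34X^6 + 46X^5 + 43X^4 + 27X^3 + 50X^2 + 56X + 1, up to the leading unit; moreover h is irreducible over ℤ/59ℤ (so the factorization type is 1 + 15, giving a 15-cycle). -/
/-!
A reducible polynomial of degree `n` over a field with `q` elements has an irreducible factor of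
some degree `k ≤ n / 2`, and this factor divides `X ^ q ^ k - X`. Hence a polynomial `f` of degree
`n` is irreducible as soon as the product of `X ^ q ^ k - X` over `1 ≤ k ≤ n / 2` is invertible
modulo `f`. For `f = h59` we have `q = 59` and `n / 2 = 7`, and an explicit inverse certifies this.
To check it, one computes in `(ZMod 59)[X] / (h59)`, where the Frobenius map is linear over
`ZMod 59` and therefore amounts to substituting `X ^ 59` for `X`.
-/

open Polynomial in
/-- The degree-16 integer polynomial `f_δ` whose root in [0.167, 0.169] is the
optimal value of δ. -/
noncomputable def fdelta : Polynomial ℤ :=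
  589824 * X ^ 16 - 7077888 * X ^ 15 + 41189376 * X ^ 14 - 154386432 * X ^ 13 +
    416788480 * X ^ 12 - 857112576 * X ^ 11 + 1383417856 * X ^ 10 - 1779354624 * X ^ 9 +
    1834437632 * X ^ 8 - 1514108928 * X ^ 7 + 992782336 * X ^ 6 - 509312064 * X ^ 5 +
    199354208 * X ^ 4 - 57160752 * X ^ 3 + 11200088 * X ^ 2 - 1313928 * X + 67417

open Polynomial

/-- The irreducible degree-15 factor of `f_δ` modulo 59. -/
noncomputable def h59 : Polynomial (ZMod 59) :=
  X ^ 15 + 8 * X ^ 14 + 43 * X ^ 13 + 23 * X ^ 12 + 19 * X ^ 11 + 38 * X ^ 10 +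
    9 * X ^ 9 + 6 * X ^ 8 + 17 * X ^ 7 + 34 * X ^ 6 + 46 * X ^ 5 + 43 * X ^ 4 +
    27 * X ^ 3 + 50 * X ^ 2 + 56 * X + 1

theorem irreducible_iff_forall_isCoprime_X_pow_card_pow_sub_X {K : Type*} [Field K] [Finite K]
    {f : K[X]} (hf : 0 < f.natDegree) :
    Irreducible f ↔
      ∀ k ∈ Finset.Icc 1 (f.natDegree / 2), IsCoprime f (X ^ Nat.card K ^ k - X) := by
  refine ⟨fun hirr k hk ↦ ?_, fun hcop ↦ ?_⟩
  · rw [Finset.mem_Icc] at hk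
    refine hirr.coprime_iff_not_dvd.2 fun hdvd ↦ ?_
    have hle := Nat.le_of_dvd hk.1 (hirr.natDegree_dvd_of_dvd_X_pow_card_pow_sub_X hdvd)
    omega
  · have hunit : ¬IsUnit f := fun h ↦ hf.ne' (natDegree_eq_zero_of_isUnit h)
    rw [irreducible_iff_lt_natDegree_lt (ne_zero_of_natDegree_gt hf) hunit]
    intro q hq hqdeg hqf
    rw [Finset.mem_Ioc] at hqdeg
    obtain ⟨g, hg, hgq⟩ := exists_irreducible_of_natDegree_pos hqdeg.1
    have hgdeg : g.natDegree ∈ Finset.Icc 1 (f.natDegree / 2) :=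
      Finset.mem_Icc.2 ⟨hg.natDegree_pos, (natDegree_le_of_dvd hgq hq.ne_zero).trans hqdeg.2⟩
    have hgX : g ∣ X ^ Nat.card K ^ g.natDegree - X :=
      hg.natDegree_dvd_iff_dvd_X_pow_card_pow_sub_X.1 dvd_rfl
    exact hg.not_isUnit ((hcop _ hgdeg).isUnit_of_dvd' (hgq.trans hqf) hgX)

theorem isCoprime_of_isUnit_adjoinRoot_mk {R : Type*} [CommRing R] {f g : R[X]}
    (h : IsUnit (AdjoinRoot.mk f g)) : IsCoprime f g := by
  obtain ⟨b, hb⟩ := isUnit_iff_exists_inv'.1 h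
  obtain ⟨u, rfl⟩ := AdjoinRoot.mk_surjective b
  rw [← map_mul, ← map_one (AdjoinRoot.mk f), AdjoinRoot.mk_eq_mk] at hb
  obtain ⟨v, hv⟩ := hb
  exact ⟨-v, u, by linear_combination hv⟩

theorem map_ofDigits {R S : Type*} [Semiring R] [Semiring S] (φ : R →+* S) (x : R) (l : List ℕ) :
    φ (Nat.ofDigits x l) = Nat.ofDigits (φ x) l := by
  induction l with
  | nil => exact map_zero φ
  | cons c l ih => simp only [Nat.ofDigits, map_add, map_mul, map_natCast, ih]

theorem ofDigits_eq_ofDigits_take_add_drop {R : Type*} [CommSemiring R] (x : R) (n : ℕ)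
    (l : List ℕ) :
    Nat.ofDigits x l = Nat.ofDigits x (l.take n) + x ^ n * Nat.ofDigits x (l.drop n) := by
  induction n generalizing l with
  | zero => simp [Nat.ofDigits]
  | succ n ih =>
    cases l with
    | nil => simp [Nat.ofDigits]
    | cons c l =>
      simp only [List.take_succ_cons, List.drop_succ_cons, Nat.ofDigits]
      rw [ih l]
      ring

theorem ofDigits_pow_char {R : Type*} [CommSemiring R] (p : ℕ) [ExpChar R p] (x : R)
    (l : List ℕ) : Nat.ofDigits x l ^ p = Nat.ofDigits (x ^ p) l :=
  map_ofDigits (frobenius R p) x l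

/-- The combination `a + c b` of two elements of `(ℤ/pℤ)[X]`, each encoded by the list of its
coefficients, lowest degree first, so that `Nat.ofDigits x` is evaluation at `x`. Coefficients are
natural numbers because the kernel computes with those natively. -/
def addSMulMod (p c : ℕ) : List ℕ → List ℕ → List ℕ
  | [], b => b.map (c * · % p)
  | a, [] => a
  | s :: a, t :: b => (s + c * t) % p :: addSMulMod p c a b

/-- One step of long division by the monic polynomial `X ^ r.length - r`: the leading term
`c X ^ r.length` of `l`, if it is of that degree, is replaced by `c r`. -/
def reduceMod (p : ℕ) (r l : List ℕ) : List ℕ :=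
  match l.drop r.length with
  | [c] => addSMulMod p c (l.take r.length) r
  | _ => l

/-- The sum `∑ i, bᵢ gⁱ(a)`. Both the product and the Frobenius map of
`(ℤ/pℤ)[X] / (X ^ r.length - r)` are of this form. -/
def sumSMulIterateMod (p : ℕ) (g : List ℕ → List ℕ) : List ℕ → List ℕ → List ℕ
  | [], _ => []
  | c :: b, a => addSMulMod p c (sumSMulIterateMod p g b (g a)) a

/-- The product by `X` in `(ℤ/pℤ)[X] / (X ^ r.length - r)`. -/
def mulXMod (p : ℕ) (r l : List ℕ) : List ℕ :=
  reduceMod p r (0 :: l)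

/-- The product of `(ℤ/pℤ)[X] / (X ^ r.length - r)`. -/
def mulMod (p : ℕ) (r a b : List ℕ) : List ℕ :=
  sumSMulIterateMod p (mulXMod p r) b a

/-- The Frobenius map of `(ℤ/pℤ)[X] / (X ^ r.length - r)`, computed by substituting `X ^ p`
for `X`. -/
def frobeniusMod (p : ℕ) (r l : List ℕ) : List ℕ :=
  sumSMulIterateMod p (mulMod p r ((mulXMod p r)^[p] [1])) l [1]

/-- The product of `X ^ p ^ k - X` over `1 ≤ k ≤ m` in `(ℤ/pℤ)[X] / (X ^ r.length - r)`. -/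
def prodXPowSubXMod (p : ℕ) (r : List ℕ) : ℕ → List ℕ
  | 0 => [1]
  | m + 1 => mulMod p r (prodXPowSubXMod p r m)
      (addSMulMod p (p - 1) ((frobeniusMod p r)^[m + 1] [0, 1]) [0, 1])

section Evaluation

variable {A : Type*} [CommRing A] {p : ℕ} [CharP A p] {x : A} {r : List ℕ}

theorem ofDigits_map_mul_mod (c : ℕ) (b : List ℕ) :
    Nat.ofDigits x (b.map (c * · % p)) = c * Nat.ofDigits x b := by
  induction b with
  | nil => simp [Nat.ofDigits]
  | cons t b ih =>
    simp only [List.map_cons, Nat.ofDigits, ih, ← CharP.natCast_eq_natCast_mod A p, Nat.cast_mul]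
    ring

theorem ofDigits_addSMulMod (c : ℕ) (a b : List ℕ) :
    Nat.ofDigits x (addSMulMod p c a b) = Nat.ofDigits x a + c * Nat.ofDigits x b := by
  induction a generalizing b with
  | nil => simp only [addSMulMod, ofDigits_map_mul_mod, Nat.ofDigits, zero_add]
  | cons s a ih =>
    cases b with
    | nil => simp [addSMulMod, Nat.ofDigits]
    | cons t b =>
      simp only [addSMulMod, Nat.ofDigits, ih, ← CharP.natCast_eq_natCast_mod A p, Nat.cast_add,
        Nat.cast_mul]
      ring

theorem ofDigits_sumSMulIterateMod {g : List ℕ → List ℕ} {y : A}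
    (hg : ∀ l, Nat.ofDigits x (g l) = y * Nat.ofDigits x l) (b a : List ℕ) :
    Nat.ofDigits x (sumSMulIterateMod p g b a) = Nat.ofDigits y b * Nat.ofDigits x a := by
  induction b generalizing a with
  | nil => simp [sumSMulIterateMod, Nat.ofDigits]
  | cons c b ih =>
    simp only [sumSMulIterateMod, ofDigits_addSMulMod, ih, hg, Nat.ofDigits]
    ring

theorem ofDigits_reduceMod (hx : x ^ r.length = Nat.ofDigits x r) (l : List ℕ) :
    Nat.ofDigits x (reduceMod p r l) = Nat.ofDigits x l := by
  unfold reduceMod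
  split
  next c hc =>
    rw [ofDigits_addSMulMod, ofDigits_eq_ofDigits_take_add_drop x r.length l, hc, hx]
    simp only [Nat.ofDigits]
    ring
  next => rfl

theorem ofDigits_mulXMod (hx : x ^ r.length = Nat.ofDigits x r) (l : List ℕ) :
    Nat.ofDigits x (mulXMod p r l) = x * Nat.ofDigits x l := by
  simp [mulXMod, ofDigits_reduceMod hx, Nat.ofDigits]

theorem ofDigits_iterate_mulXMod (hx : x ^ r.length = Nat.ofDigits x r) (n : ℕ) :
    Nat.ofDigits x ((mulXMod p r)^[n] [1]) = x ^ n := by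
  induction n with
  | zero => simp [Nat.ofDigits]
  | succ n ih => rw [Function.iterate_succ_apply', ofDigits_mulXMod hx, ih, pow_succ']

theorem ofDigits_mulMod (hx : x ^ r.length = Nat.ofDigits x r) (a b : List ℕ) :
    Nat.ofDigits x (mulMod p r a b) = Nat.ofDigits x a * Nat.ofDigits x b := by
  rw [mulMod, ofDigits_sumSMulIterateMod (ofDigits_mulXMod hx), mul_comm]

theorem ofDigits_frobeniusMod [Fact p.Prime] (hx : x ^ r.length = Nat.ofDigits x r)
    (l : List ℕ) : Nat.ofDigits x (frobeniusMod p r l) = Nat.ofDigits x l ^ p := by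
  have hmul (l : List ℕ) :
      Nat.ofDigits x (mulMod p r ((mulXMod p r)^[p] [1]) l) = x ^ p * Nat.ofDigits x l := by
    rw [ofDigits_mulMod hx, ofDigits_iterate_mulXMod hx]
  rw [frobeniusMod, ofDigits_sumSMulIterateMod hmul, ofDigits_pow_char]
  simp [Nat.ofDigits]

theorem ofDigits_iterate_frobeniusMod [Fact p.Prime] (hx : x ^ r.length = Nat.ofDigits x r)
    (k : ℕ) : Nat.ofDigits x ((frobeniusMod p r)^[k] [0, 1]) = x ^ p ^ k := by
  induction k with
  | zero => simp [Nat.ofDigits]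
  | succ k ih =>
    rw [Function.iterate_succ_apply', ofDigits_frobeniusMod hx, ih, ← pow_mul, ← pow_succ]

theorem ofDigits_prodXPowSubXMod [Fact p.Prime] (hx : x ^ r.length = Nat.ofDigits x r) (m : ℕ) :
    Nat.ofDigits x (prodXPowSubXMod p r m) = ∏ k ∈ Finset.Icc 1 m, (x ^ p ^ k - x) := by
  induction m with
  | zero => simp [prodXPowSubXMod, Nat.ofDigits]
  | succ m ih =>
    have hneg : ((p - 1 : ℕ) : A) = -1 := by
      simp [Nat.cast_pred (Fact.out : p.Prime).pos]
    rw [prodXPowSubXMod, ofDigits_mulMod hx, ih, ofDigits_addSMulMod,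
      ofDigits_iterate_frobeniusMod hx, hneg, Finset.prod_Icc_succ_top (by omega)]
    simp [Nat.ofDigits, sub_eq_add_neg]

end Evaluation

theorem irreducible_of_ofDigits_mulMod_prodXPowSubXMod_eq_one {p : ℕ} [Fact p.Prime]
    {f : (ZMod p)[X]} (hf : 0 < f.natDegree) {r : List ℕ}
    (hr : f ∣ X ^ r.length - Nat.ofDigits X r) {u : List ℕ}
    (hu : Nat.ofDigits (X : (ZMod p)[X])
      (mulMod p r u (prodXPowSubXMod p r (f.natDegree / 2))) = 1) :
    Irreducible f := by
  rw [irreducible_iff_forall_isCoprime_X_pow_card_pow_sub_X hf, ← IsCoprime.prod_right_iff,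
    Nat.card_zmod]
  apply isCoprime_of_isUnit_adjoinRoot_mk
  have : Nontrivial (AdjoinRoot f) :=
    AdjoinRoot.nontrivial f (natDegree_pos_iff_degree_pos.1 hf).ne'
  have : CharP (AdjoinRoot f) p :=
    charP_of_injective_algebraMap (algebraMap (ZMod p) (AdjoinRoot f)).injective p
  have hroot : AdjoinRoot.root f ^ r.length = Nat.ofDigits (AdjoinRoot.root f) r := by
    rw [← AdjoinRoot.mk_eq_zero, map_sub, map_pow, map_ofDigits, AdjoinRoot.mk_X] at hr
    exact sub_eq_zero.1 hr
  have hinv := congrArg (AdjoinRoot.mk f) hu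
  rw [map_ofDigits, AdjoinRoot.mk_X, map_one, ofDigits_mulMod hroot,
    ofDigits_prodXPowSubXMod hroot] at hinv
  simpa only [map_prod, map_sub, map_pow, AdjoinRoot.mk_X] using
    IsUnit.of_mul_eq_one_right _ hinv

theorem map_fdelta :
    fdelta.map (Int.castRingHom (ZMod 59)) = (X + C 39) * h59 := by
  have hC : (C 39 : (ZMod 59)[X]) = 39 := map_ofNat C 39
  simp only [fdelta, h59, hC, Polynomial.map_add, Polynomial.map_sub, Polynomial.map_mul,
    Polynomial.map_pow, Polynomial.map_X, Polynomial.map_ofNat]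
  linear_combination (norm := (ring_nf; reduce_mod_char))

theorem natDegree_h59 : h59.natDegree = 15 := by
  unfold h59
  compute_degree!

/-- The coefficients of `X ^ 15 - h59`. -/
def h59Tail : List ℕ := [58, 3, 9, 32, 16, 13, 25, 42, 53, 50, 21, 40, 36, 16, 51]

theorem h59_eq_X_pow_sub_ofDigits : h59 = X ^ h59Tail.length - Nat.ofDigits X h59Tail := by
  simp only [h59, h59Tail, Nat.ofDigits, List.length_cons, List.length_nil]
  push_cast
  linear_combination (norm := (ring_nf; reduce_mod_char))

/-- The inverse modulo `h59` of the product of `X ^ 59 ^ k - X` over `1 ≤ k ≤ 7`, found by the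
extended Euclidean algorithm. -/
def h59Inverse : List ℕ := [27, 34, 12, 8, 40, 26, 42, 56, 38, 39, 51, 58, 5, 5, 51]

theorem mulMod_h59Inverse :
    mulMod 59 h59Tail h59Inverse (prodXPowSubXMod 59 h59Tail 7) = 1 :: List.replicate 14 0 := by
  decide +kernel

theorem irreducible_h59 : Irreducible h59 := by
  have : Fact (Nat.Prime 59) := ⟨by norm_num⟩
  refine irreducible_of_ofDigits_mulMod_prodXPowSubXMod_eq_one (r := h59Tail) (u := h59Inverse)
    (by simp [natDegree_h59]) h59_eq_X_pow_sub_ofDigits.dvd ?_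
  rw [natDegree_h59, mulMod_h59Inverse]
  simp [Nat.ofDigits, List.replicate]

/-- The reduction of `f_δ` modulo 59 factors, up to the leading unit, as `(X + 39) · h`
with `h` irreducible over ℤ/59ℤ, i.e. the factorization type is 1 + 15 (a 15-cycle). -/
theorem fdelta_mod_59_factorization :
    (∃ u : ZMod 59, IsUnit u ∧
        fdelta.map (Int.castRingHom (ZMod 59)) = C u * ((X + C 39) * h59)) ∧
      Irreducible h59 := by
  refine ⟨⟨1, isUnit_one, ?_⟩, irreducible_h59⟩
  rw [map_fdelta, C_1, one_mul]
end

section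
/- The Galois group of f_δ over ℚ is not a solvable group. -/
open Polynomial in
/-- The degree-16 polynomial `f_δ`, regarded as a polynomial over ℚ. -/
noncomputable def fdeltaQ : Polynomial ℚ :=
  589824 * X ^ 16 - 7077888 * X ^ 15 + 41189376 * X ^ 14 - 154386432 * X ^ 13 +
    416788480 * X ^ 12 - 857112576 * X ^ 11 + 1383417856 * X ^ 10 - 1779354624 * X ^ 9 +
    1834437632 * X ^ 8 - 1514108928 * X ^ 7 + 992782336 * X ^ 6 - 509312064 * X ^ 5 +
    199354208 * X ^ 4 - 57160752 * X ^ 3 + 11200088 * X ^ 2 - 1313928 * X + 67417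

/-!
A solvable transitive permutation group `G` of degree `n < 2p` whose order is divisible by the prime
`p` has `n ≤ p + 1`: an element of order `p` acts as a single `p`-cycle, so `G` is primitive and has
a regular abelian normal subgroup, and then the number `n - p < p` of fixed points of the `p`-cycle,
if nonzero, divides `n`, hence divides `p`, hence is `1`. The Galois group of `f_δ` violates this
with `n = 16` and `p = 11`.

After the substitution `t = 6 x - 5` the polynomial `f_δ` becomes, up to a constant, monic and
integral. Modulo `2` it is `Φ₅ ^ 4`, and Schönemann's criterion shows that it is irreducible. Modulo
`11` it has an irreducible factor of degree `11`. The residue field of the splitting field of `f_δ`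
at a prime above `11` contains a root of this factor, hence a solution of `y ^ 11 = y + 1`, so `11`
divides the residue degree and therefore the order of the Galois group.
-/

open MulAction Polynomial Subgroup
open scoped Pointwise

section Solvable

variable {G Y : Type*} [Group G] [MulAction G Y]

theorem exists_normal_isMulCommutative_ne_bot [Group.IsSolvable G] [Nontrivial G] :
    ∃ N : Subgroup G, N.Normal ∧ IsMulCommutative N ∧ N ≠ ⊥ := by
  classical
  have hsolv : ∃ n, derivedSeries G n = ⊥ := Group.IsSolvable.solvable
  obtain ⟨m, hm⟩ : ∃ m, Nat.find hsolv = m + 1 :=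
    Nat.exists_eq_succ_of_ne_zero ((Nat.find_pos hsolv).mpr top_ne_bot).ne'
  refine ⟨derivedSeries G m, inferInstance, ?_, Nat.find_min hsolv (by omega)⟩
  rw [← commutator_self_eq_bot_iff, ← derivedSeries_succ, ← hm]
  exact Nat.find_spec hsolv

theorem bijective_smul_of_isMulCommutative [FaithfulSMul G Y] [IsPretransitive G Y]
    [IsMulCommutative G] (y : Y) : Function.Bijective fun g : G => g • y := by
  refine ⟨fun g h hgh => FaithfulSMul.eq_of_smul_eq_smul fun z : Y => ?_,
    fun z => exists_smul_eq G y z⟩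
  obtain ⟨k, rfl⟩ := exists_smul_eq G y z
  rw [← mul_smul, ← mul_smul, mul_comm' g, mul_comm' h, mul_smul, mul_smul]
  exact congrArg (k • ·) hgh

theorem card_fixedBy_dvd_of_normal (N : Subgroup G) [hN : N.Normal] {y : Y}
    (hbij : Function.Bijective fun n : N => n • y) {g : G} (hg : g • y = y) :
    Nat.card (fixedBy Y g) ∣ Nat.card Y := by
  have hfix (n : N) : n ∈ (centralizer {g}).subgroupOf N ↔ n • y ∈ fixedBy Y g := by
    have hconj : g • n • y = (⟨g * n * g⁻¹, hN.conj_mem n n.2 g⟩ : N) • y := by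
      simp only [Subgroup.smul_def, mul_smul, inv_smul_eq_iff.mpr hg.symm]
    rw [mem_fixedBy, hconj, hbij.1.eq_iff, mem_subgroupOf, mem_centralizer_singleton_iff,
      Subtype.ext_iff, mul_inv_eq_iff_eq_mul, eq_comm]
  have hcard : Nat.card ((centralizer {g}).subgroupOf N) = Nat.card (fixedBy Y g) :=
    Nat.card_congr ((Equiv.ofBijective _ hbij).subtypeEquiv hfix)
  rw [← hcard, ← Nat.card_congr (Equiv.ofBijective _ hbij)]
  exact card_subgroup_dvd_card _

theorem smul_eq_self_of_isPGroup_zpowers {p : ℕ} [Fact p.Prime] {σ : G}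
    (hσ : IsPGroup p (zpowers σ)) {B : Set Y} (hfin : B.Finite) (hB : σ • B = B)
    (hcard : B.ncard < p) {y : Y} (hy : y ∈ B) : σ • y = y := by
  have hsub : orbit (zpowers σ) y ⊆ B := by
    rintro _ ⟨⟨τ, hτ⟩, rfl⟩
    exact smul_eq_self_of_mem_zpowers hτ hB ▸ Set.smul_mem_smul_set hy
  have := (hfin.subset hsub).to_subtype
  obtain ⟨k, hk⟩ := hσ.card_orbit y
  have hpow : p ^ k < p ^ 1 := by
    rw [← hk, pow_one, Nat.card_coe_set_eq]
    exact (Set.ncard_le_ncard hsub hfin).trans_lt hcard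
  have hk_zero : k = 0 :=
    Nat.lt_one_iff.mp ((Nat.pow_lt_pow_iff_right (Fact.out : p.Prime).one_lt).mp hpow)
  rw [hk_zero, pow_zero] at hk
  have := (Nat.card_eq_one_iff_unique.mp hk).1
  exact Set.subsingleton_coe _ |>.mp this (mem_orbit y (⟨σ, mem_zpowers σ⟩ : zpowers σ))
    (mem_orbit_self y)

theorem isPreprimitive_of_isPGroup_zpowers [Finite Y] [IsPretransitive G Y] {p : ℕ}
    [Fact p.Prime] {σ : G} (hσ : IsPGroup p (zpowers σ)) (hcard : Nat.card Y < 2 * p)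
    (hmoved : ∃ y : Y, σ • y ≠ y) : IsPreprimitive G Y where
  -- A nontrivial block `B` and its orbit both have fewer than `p` elements, so `σ` stabilises every
  -- translate of `B` and fixes each of its points.
  isTrivialBlock_of_isBlock {B} hB := by
    by_contra hnontrivial
    rw [IsTrivialBlock, not_or, Set.not_subsingleton_iff] at hnontrivial
    obtain ⟨hnt, hne_univ⟩ := hnontrivial
    have hmul := hB.ncard_block_mul_ncard_orbit_eq hnt.nonempty
    have hB_two : 2 ≤ B.ncard := (Set.one_lt_ncard_iff_nontrivial).mpr hnt
    have horbit_two : 2 ≤ (orbit G B).ncard := by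
      have := Set.ncard_lt_card hne_univ
      by_contra! h
      nlinarith
    have hB_lt : B.ncard < p := by nlinarith
    have horbit_lt : (orbit G B).ncard < p := by nlinarith
    obtain ⟨y, hy⟩ := hmoved
    obtain ⟨b, hb⟩ := hnt.nonempty
    obtain ⟨g, rfl⟩ := exists_smul_eq G b y
    have hblock : σ • g • B = g • B :=
      smul_eq_self_of_isPGroup_zpowers hσ (Set.toFinite _) (smul_orbit σ B) horbit_lt
        (mem_orbit B g)
    refine hy (smul_eq_self_of_isPGroup_zpowers hσ (Set.toFinite _) hblock ?_
      (Set.smul_mem_smul_set hb))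
    rwa [Set.ncard_smul_set]

theorem card_fixedBy_add_of_isPGroup_zpowers [Finite Y] {p : ℕ} [Fact p.Prime] {σ : G}
    (hσ : IsPGroup p (zpowers σ)) (hcard : Nat.card Y < 2 * p) (hmoved : ∃ y : Y, σ • y ≠ y) :
    Nat.card (fixedBy Y σ) + p = Nat.card Y := by
  have hfix : fixedPoints (zpowers σ) Y = fixedBy Y σ := by
    ext y
    exact ⟨fun h => h ⟨σ, mem_zpowers σ⟩, fun h τ => smul_eq_self_of_mem_zpowers τ.2 h⟩
  have hlt : Nat.card (fixedBy Y σ) < Nat.card Y := by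
    rw [Nat.card_coe_set_eq]
    exact Set.ncard_lt_card ((Set.ne_univ_iff_exists_notMem _).mpr hmoved)
  have hmod := hσ.card_modEq_card_fixedPoints Y
  rw [hfix] at hmod
  obtain ⟨k, hk⟩ := (Nat.modEq_iff_dvd' hlt.le).mp hmod.symm
  have hk_pos : 0 < k := Nat.pos_of_ne_zero (by rintro rfl; omega)
  have hk_lt : k < 2 := Nat.lt_of_mul_lt_mul_left (a := p) (by omega)
  obtain rfl : k = 1 := by omega
  omega

theorem isPretransitive_of_normal_ne_bot [FaithfulSMul G Y] [IsQuasiPreprimitive G Y]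
    {N : Subgroup G} [N.Normal] (hN : N ≠ ⊥) : IsPretransitive N Y := by
  refine IsQuasiPreprimitive.isPretransitive_of_normal fun hfix => hN ?_
  refine (eq_bot_iff_forall N).mpr fun n hn => FaithfulSMul.eq_of_smul_eq_smul fun y : Y => ?_
  have hy : y ∈ fixedPoints N Y := hfix ▸ Set.mem_univ y
  rw [one_smul]
  exact hy ⟨n, hn⟩

theorem card_fixedBy_dvd_of_isSolvable [Group.IsSolvable G] [FaithfulSMul G Y]
    [IsPreprimitive G Y] {g : G} {y : Y} (hg : g • y = y) :
    Nat.card (fixedBy Y g) ∣ Nat.card Y := by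
  cases subsingleton_or_nontrivial G with
  | inl h => simp [Subsingleton.elim g 1]
  | inr h =>
    obtain ⟨N, hN, hcomm, hbot⟩ := exists_normal_isMulCommutative_ne_bot (G := G)
    have := isPretransitive_of_normal_ne_bot (Y := Y) hbot
    exact card_fixedBy_dvd_of_normal N (bijective_smul_of_isMulCommutative y) hg

theorem card_le_add_one_of_isSolvable [Group.IsSolvable G] [Finite Y] [FaithfulSMul G Y]
    [IsPretransitive G Y] {p : ℕ} [hp : Fact p.Prime] (hdvd : p ∣ Nat.card G)
    (hcard : Nat.card Y < 2 * p) : Nat.card Y ≤ p + 1 := by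
  have := Finite.of_injective _ (toPerm_injective (α := G) (β := Y))
  obtain ⟨σ, hσ⟩ := exists_prime_orderOf_dvd_card' p hdvd
  have hpgroup : IsPGroup p (zpowers σ) := IsPGroup.of_card (n := 1) (by
    rw [Nat.card_zpowers, hσ, pow_one])
  have hmoved : ∃ y : Y, σ • y ≠ y := by
    by_contra! h
    have : σ = 1 := FaithfulSMul.eq_of_smul_eq_smul fun y : Y => by rw [h, one_smul]
    exact hp.out.one_lt.ne (by rw [← hσ, this, orderOf_one])
  have := isPreprimitive_of_isPGroup_zpowers hpgroup hcard hmoved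
  have hfix := card_fixedBy_add_of_isPGroup_zpowers hpgroup hcard hmoved
  rcases isEmpty_or_nonempty (fixedBy Y σ) with hempty | ⟨y, hy⟩
  · rw [Nat.card_of_isEmpty] at hfix
    omega
  have hdvd : Nat.card (fixedBy Y σ) ∣ p :=
    (Nat.dvd_add_right dvd_rfl).mp (hfix ▸ card_fixedBy_dvd_of_isSolvable hy)
  rcases (Nat.dvd_prime hp.out).mp hdvd with h | h <;> omega

end Solvable

theorem not_isSolvable_gal_of_prime_dvd_card {F : Type*} [Field F] {f : F[X]}
    (hirr : Irreducible f) (hsep : f.Separable) {p : ℕ} [Fact p.Prime]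
    (hdvd : p ∣ Nat.card f.Gal) (hlow : p + 1 < f.natDegree) (hhigh : f.natDegree < 2 * p) :
    ¬ Group.IsSolvable f.Gal := by
  intro hsolv
  have : Fact ((f.map (algebraMap F (AlgebraicClosure F))).Splits) := ⟨IsAlgClosed.splits _⟩
  have := Gal.galAction_isPretransitive f (AlgebraicClosure F) hirr
  have : FaithfulSMul f.Gal (f.rootSet (AlgebraicClosure F)) :=
    ⟨fun h => Gal.galActionHom_injective f (AlgebraicClosure F) (Equiv.ext h)⟩
  have hcard : Nat.card (f.rootSet (AlgebraicClosure F)) = f.natDegree := by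
    rw [Nat.card_eq_fintype_card, card_rootSet_eq_natDegree hsep (IsAlgClosed.splits _)]
  have := card_le_add_one_of_isSolvable hdvd (hcard.trans_lt hhigh)
  omega

theorem isGalois_splittingField {F : Type*} [Field F] {f : F[X]} (hf : f.Separable) :
    IsGalois F f.SplittingField :=
  IsGalois.of_separable_splitting_field hf

theorem dvd_of_card_eq_pow_of_pow_eq_add_one {k : Type*} [Field k] {p n : ℕ} [Fact p.Prime]
    [CharP k p] (hcard : Nat.card k = p ^ n) {β : k} (hβ : β ^ p = β + 1) : p ∣ n := by
  have hfrob (i : ℕ) : β ^ p ^ i = β + i := by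
    induction i with
    | zero => simp
    | succ i ih =>
      rw [pow_succ, pow_mul, ih, add_pow_char, hβ, ← frobenius_def, map_natCast, Nat.cast_succ]
      ring
  have : Finite k := Nat.finite_of_card_ne_zero (hcard ▸ pow_ne_zero n (NeZero.ne p))
  have := Fintype.ofFinite k
  rw [← CharP.cast_eq_zero_iff k, ← add_eq_left (a := β), ← hfrob, ← hcard,
    Nat.card_eq_fintype_card, FiniteField.pow_card]

theorem inertiaDeg_dvd_card {A B : Type*} [CommRing A] [IsDomain A] [CommRing B] [IsDomain B]
    [Algebra A B] [Module.Finite A B] [Module.Flat A B] (G : Type*) [Group G] [Finite G]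
    [MulSemiringAction G B] [IsGaloisGroup G A B] (Q : Ideal B) [Q.IsPrime] :
    Q.inertiaDeg A ∣ Nat.card G := by
  rw [← Ideal.ncard_primesOver_mul_ramificationIdxIn_mul_inertiaDegIn (Q.under A) B G,
    Ideal.inertiaDegIn_eq_inertiaDeg (Q.under A) Q G]
  exact dvd_mul_of_dvd_right (dvd_mul_left _ _) _

theorem splits_map_integralClosure {R L : Type*} [CommRing R] [Field L] [Algebra R L] {g : R[X]}
    (hg : g.Monic) (hs : (g.map (algebraMap R L)).Splits) :
    (g.map (algebraMap R (integralClosure R L))).Splits := by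
  refine Splits.of_splits_map_of_injective (i := algebraMap (integralClosure R L) L)
    (FaithfulSMul.algebraMap_injective _ _) ?_ fun a ha => ?_
  · rwa [Polynomial.map_map, ← IsScalarTower.algebraMap_eq]
  · rw [Polynomial.map_map, ← IsScalarTower.algebraMap_eq, mem_roots', IsRoot, eval_map] at ha
    exact ⟨⟨a, g, hg, ha.2⟩, rfl⟩

theorem exists_isMaximal_card_quotient_eq_pow (B G : Type*) [CommRing B] [IsDomain B]
    [Module.Finite ℤ B] [CharZero B] [Group G] [Finite G]
    [MulSemiringAction G B] [IsGaloisGroup G ℤ B] (p : ℕ) [hp : Fact p.Prime] :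
    ∃ Q : Ideal B, Q.IsMaximal ∧ ∃ n, Nat.card (B ⧸ Q) = p ^ n ∧ n ∣ Nat.card G := by
  have hpZ : Prime (p : ℤ) := Nat.prime_iff_prime_int.mp hp.out
  have : (Ideal.span {(p : ℤ)}).IsMaximal :=
    PrincipalIdealRing.isMaximal_of_irreducible hpZ.irreducible
  obtain ⟨Q, hQ, hQp⟩ := (inferInstance : Nonempty (Ideal.primesOver (Ideal.span {(p : ℤ)}) B))
  have := Ideal.IsMaximal.of_liesOver_isMaximal Q (Ideal.span {(p : ℤ)})
  refine ⟨Q, this, Q.inertiaDeg ℤ, ?_, inertiaDeg_dvd_card G Q⟩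
  have hcard := Ideal.cardQuot_pow_inertiaDeg (Ideal.span {(p : ℤ)}) Q
  rw [Submodule.cardQuot_apply, Nat.card_congr (Int.quotientSpanNatEquivZMod p).toEquiv,
    Nat.card_zmod] at hcard
  exact hcard.symm

theorem exists_aeval_eq_zero_of_dvd_map {R F k : Type*} [CommRing R] [Field F] [Field k]
    [Algebra R F] [Algebra R k] [Algebra F k] [IsScalarTower R F k] {g : R[X]} (hg : g.Monic)
    (hs : (g.map (algebraMap R k)).Splits) {h : F[X]} (hdeg : h.degree ≠ 0)
    (hdvd : h ∣ g.map (algebraMap R F)) : ∃ a : k, aeval a h = 0 := by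
  have hsplit : (h.map (algebraMap F k)).Splits := by
    refine hs.of_dvd (hg.map _).ne_zero ?_
    rw [IsScalarTower.algebraMap_eq R F k, ← Polynomial.map_map]
    exact Polynomial.map_dvd _ hdvd
  obtain ⟨a, ha⟩ := hsplit.exists_eval_eq_zero (by rwa [degree_map])
  exact ⟨a, by rwa [aeval_def, ← eval_map]⟩

theorem dvd_card_gal_of_artinSchreier {K : Type*} [Field K] [Algebra ℚ K] [FiniteDimensional ℚ K]
    [IsGalois ℚ K] {p : ℕ} [Fact p.Prime] {g : ℤ[X]} (hg : g.Monic)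
    (hs : (g.map (algebraMap ℤ K)).Splits) {h b : (ZMod p)[X]}
    (hdeg : h.degree ≠ 0) (hdvd : h ∣ g.map (algebraMap ℤ (ZMod p))) (hb : h ∣ b ^ p - (b + 1)) :
    p ∣ Nat.card Gal(K/ℚ) := by
  have : CharZero K := algebraRat.charZero K
  have := IsIntegralClosure.finite ℤ ℚ K (integralClosure ℤ K)
  have : IsFractionRing (integralClosure ℤ K) K :=
    integralClosure.isFractionRing_of_finite_extension ℚ K
  let := IsIntegralClosure.MulSemiringAction ℤ ℚ K (integralClosure ℤ K)
  have : IsGaloisGroup Gal(K/ℚ) ℤ (integralClosure ℤ K) :=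
    IsGaloisGroup.of_isFractionRing Gal(K/ℚ) ℤ _ ℚ K
  obtain ⟨Q, hQ, n, hcard, hn⟩ :=
    exists_isMaximal_card_quotient_eq_pow (integralClosure ℤ K) Gal(K/ℚ) p
  let k := integralClosure ℤ K ⧸ Q
  let : Field k := Ideal.Quotient.field Q
  have : Finite k := Nat.finite_of_card_ne_zero (hcard ▸ pow_ne_zero n (NeZero.ne p))
  have := Fintype.ofFinite k
  have : CharP k p := charP_of_card_eq_prime_pow (Nat.card_eq_fintype_card.symm.trans hcard)
  let : Algebra (ZMod p) k := ZMod.algebra k p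
  have hsk : (g.map (algebraMap ℤ k)).Splits := by
    have := (splits_map_integralClosure hg hs).map (Ideal.Quotient.mk Q)
    rwa [Polynomial.map_map] at this
  obtain ⟨a, ha⟩ := exists_aeval_eq_zero_of_dvd_map hg hsk hdeg hdvd
  have hb' : aeval a b ^ p = aeval a b + 1 := by
    have := aeval_eq_zero_of_dvd_aeval_eq_zero hb ha
    rwa [map_sub, map_pow, map_add, map_one, sub_eq_zero] at this
  exact (dvd_of_card_eq_pow_of_pow_eq_add_one hcard hb').trans hn

theorem irreducible_pow_add_C_mul {R K : Type*} [CommRing R] [IsDomain R] [Field K] [Algebra R K]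
    {π : R} (hπ : RingHom.ker (algebraMap R K) = Ideal.span {π}) (hπ_ne_zero : π ≠ 0)
    {φ h : R[X]} {n : ℕ} (hφ : φ.Monic) (hirr : Irreducible (φ.map (algebraMap R K)))
    (hn : n ≠ 0) (hmonic : (φ ^ n + C π * h).Monic)
    (hdvd : ¬ φ.map (algebraMap R K) ∣ h.map (algebraMap R K)) :
    Irreducible (φ ^ n + C π * h) := by
  have hπ_map : algebraMap R K π = 0 := by
    rw [← RingHom.mem_ker, hπ]
    exact Ideal.mem_span_singleton_self π
  have hmap : (φ ^ n + C π * h).map (algebraMap R K) = φ.map (algebraMap R K) ^ n := by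
    simp [hπ_map]
  have hmod : (φ ^ n + C π * h) %ₘ φ = C π * (h %ₘ φ) := by
    rw [add_modByMonic, (modByMonic_eq_zero_iff_dvd hφ).mpr (dvd_pow_self φ hn), zero_add,
      C_mul', smul_modByMonic, C_mul']
  refine generalizedEisenstein (q := φ) (p := n) hirr hφ hmonic.isPrimitive ?_ ?_ ?_ ?_
  · rw [← hmonic.natDegree_map (algebraMap R K), hmap, natDegree_pow]
    exact mul_pos (Nat.pos_of_ne_zero hn) hirr.natDegree_pos
  · rw [hmonic.leadingCoeff, map_one]
    exact one_ne_zero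
  · rw [hmap, hmonic.leadingCoeff, map_one, C_1, one_mul]
  · rw [hmod]
    contrapose! hdvd
    rw [← modByMonic_eq_zero_iff_dvd (hφ.map _), ← map_modByMonic _ hφ]
    ext i
    have hi := congrArg (coeff · i) hdvd
    simp only [coeff_map, coeff_C_mul, coeff_zero, Ideal.Quotient.eq_zero_iff_mem, hπ,
      Ideal.span_singleton_pow] at hi
    rw [Ideal.mem_span_singleton, sq, mul_dvd_mul_iff_left hπ_ne_zero] at hi
    rwa [coeff_map, coeff_zero, ← RingHom.mem_ker, hπ, Ideal.mem_span_singleton]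

theorem irreducible_comp_C_mul_X_add_C_iff {R : Type*} [CommRing R] {a b : R} (ha : IsUnit a)
    {f : R[X]} : Irreducible (f.comp (C a * X + C b)) ↔ Irreducible f := by
  let := ha.invertible
  have hcomp : f.comp (C a * X + C b) = algEquivCMulXAddC a b f := by
    rw [algEquivCMulXAddC_apply, comp_eq_aeval]
  rw [hcomp, MulEquiv.irreducible_iff]

theorem cyclotomic_five (R : Type*) [Ring R] : cyclotomic 5 R = X ^ 4 + X ^ 3 + X ^ 2 + X + 1 := by
  have : Fact (Nat.Prime 5) := ⟨Nat.prime_five⟩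
  simp [cyclotomic_prime, Finset.sum_range_succ']

theorem irreducible_cyclotomic_five_zmod_two : Irreducible (cyclotomic 5 (ZMod 2)) := by
  refine ZMod.irreducible_of_dvd_cyclotomic_of_natDegree (n := 5) (by decide) dvd_rfl ?_
  rw [natDegree_cyclotomic, eq_comm]
  refine orderOf_eq_prime_pow (p := 2) (n := 1) ?_ ?_
  · decide
  · decide

theorem dvd_pow_eleven_sub {R : Type*} [CommRing R] {h b c d e : R} (hc : h ∣ b ^ 2 - c)
    (hd : h ∣ c ^ 2 * b - d) (he : h ∣ d ^ 2 * b - e) : h ∣ b ^ 11 - e := by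
  obtain ⟨u, hu⟩ := hc
  obtain ⟨v, hv⟩ := hd
  obtain ⟨w, hw⟩ := he
  have hpow_five : b ^ 5 - d = h * (b * (b ^ 2 + c) * u + v) := by
    linear_combination b * (b ^ 2 + c) * hu + hv
  exact ⟨b * (b ^ 5 + d) * (b * (b ^ 2 + c) * u + v) + w,
    by linear_combination b * (b ^ 5 + d) * hpow_five + hw⟩

theorem natDegree_fdeltaQ : fdeltaQ.natDegree = 16 := by
  unfold fdeltaQ
  compute_degree!

/-- The monic integral form of `f_δ`: the polynomial `g` with `g(6 x - 5) = 3 ^ 14 f_δ(x)`. Scaling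
by `6` makes the polynomial monic; the odd shift makes it `Φ₅ ^ 4` modulo `2`. -/
noncomputable def fdeltaMonic : ℤ[X] :=
  X ^ 16 + 8 * X ^ 15 + 114 * X ^ 14 + 442 * X ^ 13 + 2675 * X ^ 12 + 10776 * X ^ 11 +
    39694 * X ^ 10 + 50564 * X ^ 9 - 749457 * X ^ 8 - 2471392 * X ^ 7 + 726094 * X ^ 6 +
    22976004 * X ^ 5 - 27507763 * X ^ 4 - 69413078 * X ^ 3 + 321202482 * X ^ 2 - 452972452 * X +
    327679513

theorem monic_fdeltaMonic : fdeltaMonic.Monic := by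
  unfold fdeltaMonic
  monicity!

theorem C_mul_fdeltaQ : C (3 ^ 14) * fdeltaQ =
    (fdeltaMonic.map (algebraMap ℤ ℚ)).comp (C 6 * X + C (-5)) := by
  simp only [fdeltaMonic, fdeltaQ, Polynomial.map_add, Polynomial.map_sub, Polynomial.map_mul,
    Polynomial.map_pow, Polynomial.map_X, Polynomial.map_ofNat, add_comp, sub_comp, mul_comp,
    pow_comp, X_comp, ofNat_comp, map_neg, map_pow, map_ofNat]
  ring

/- Repeated division by `Φ₅`. Modulo `2` the only term of the cofactor of `C 2` that is not
divisible by `Φ₅` is `X ^ 2`. -/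
theorem fdeltaMonic_cyclotomic_expansion : fdeltaMonic = cyclotomic 5 ℤ ^ 4 + C 2 * (X ^ 2 +
    C 2 * (94538076 - 106194624 * X + 86547712 * X ^ 2 - 10676252 * X ^ 3) +
    cyclotomic 5 ℤ * (-24831172 + 11553566 * X + 2006528 * X ^ 2 - 459052 * X ^ 3 +
    cyclotomic 5 ℤ * (-406065 - 9828 * X + 9465 * X ^ 2 + 1983 * X ^ 3 +
    cyclotomic 5 ℤ * (841 + 61 * X + 46 * X ^ 2 + 2 * X ^ 3)))) := by
  rw [fdeltaMonic, cyclotomic_five]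
  simp only [map_ofNat]
  ring

theorem irreducible_fdeltaMonic : Irreducible fdeltaMonic := by
  have hmonic := monic_fdeltaMonic
  rw [fdeltaMonic_cyclotomic_expansion] at hmonic ⊢
  refine irreducible_pow_add_C_mul (K := ZMod 2) ?_ two_ne_zero (cyclotomic.monic 5 ℤ) ?_
    four_ne_zero hmonic fun hdvd => ?_
  · exact_mod_cast ZMod.ker_intCastRingHom 2
  · simpa using irreducible_cyclotomic_five_zmod_two
  · have hdvd_sq : cyclotomic 5 (ZMod 2) ∣ X ^ 2 := by
      rw [Polynomial.map_add, Polynomial.map_mul, map_cyclotomic] at hdvd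
      have := (dvd_add_left (dvd_mul_right _ _)).mp hdvd
      simpa [CharTwo.two_eq_zero] using this
    have hle := natDegree_le_of_dvd hdvd_sq (pow_ne_zero 2 X_ne_zero)
    rw [natDegree_cyclotomic, natDegree_X_pow] at hle
    exact absurd hle (by decide)

theorem irreducible_fdeltaQ : Irreducible fdeltaQ := by
  have hmul : Irreducible (C (3 ^ 14) * fdeltaQ) := by
    rw [C_mul_fdeltaQ, irreducible_comp_C_mul_X_add_C_iff (by norm_num [isUnit_iff_ne_zero])]
    exact monic_fdeltaMonic.irreducible_iff_irreducible_map_fraction_map.mp irreducible_fdeltaMonic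
  rwa [irreducible_isUnit_mul (isUnit_C.mpr (by norm_num))] at hmul

theorem splits_map_fdeltaMonic {K : Type*} [Field K] [Algebra ℚ K]
    (hs : (fdeltaQ.map (algebraMap ℚ K)).Splits) : (fdeltaMonic.map (algebraMap ℤ K)).Splits := by
  have hlin : (C (6 : ℚ) * X + C (-5)).natDegree = 1 := natDegree_linear (by norm_num)
  rw [IsScalarTower.algebraMap_eq ℤ ℚ K, ← Polynomial.map_map,
    splits_iff_comp_splits_of_natDegree_eq_one ((natDegree_map _).trans hlin),
    ← Polynomial.map_comp, ← C_mul_fdeltaQ, Polynomial.map_mul, map_C]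
  exact hs.C_mul _

/-- The irreducible factor of degree `11` of `fdeltaMonic` modulo `11`. -/
noncomputable def fdeltaFactor : (ZMod 11)[X] :=
  X ^ 11 + X ^ 10 - 4 * X ^ 9 - 4 * X ^ 8 + 2 * X ^ 6 - X ^ 5 + 5 * X ^ 4 + 4 * X ^ 3 - 2 * X ^ 2 +
    X + 5

theorem degree_fdeltaFactor : fdeltaFactor.degree = 11 := by
  unfold fdeltaFactor
  compute_degree!

theorem fdeltaFactor_dvd_map_fdeltaMonic :
    fdeltaFactor ∣ fdeltaMonic.map (algebraMap ℤ (ZMod 11)) := by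
  refine ⟨(X ^ 2 + 3 * X - 5) * (X ^ 3 + 4 * X ^ 2 + 5 * X + 5), ?_⟩
  simp only [fdeltaMonic, fdeltaFactor, Polynomial.map_add, Polynomial.map_sub,
    Polynomial.map_mul, Polynomial.map_pow, Polynomial.map_X, Polynomial.map_ofNat]
  grind

/-- An Artin–Schreier generator of the extension of `𝔽₁₁` cut out by `fdeltaFactor`: modulo that
factor it solves `y ^ 11 = y + 1`. It comes from linear algebra, the map `y ↦ y ^ 11 - y` being
`𝔽₁₁`-linear. -/
noncomputable def artinSchreierElement : (ZMod 11)[X] :=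
  -3 * X ^ 10 - X ^ 9 - 5 * X ^ 7 - X ^ 5 + 5 * X ^ 4 - 5 * X ^ 3 - 2 * X ^ 2 - 3 * X

theorem fdeltaFactor_dvd_artinSchreierElement_pow_sub :
    fdeltaFactor ∣ artinSchreierElement ^ 11 - (artinSchreierElement + 1) := by
  -- `c` and `d` are the remainders of the second and fifth powers; the witnesses are the quotients.
  refine dvd_pow_eleven_sub
    (c := -4 * X ^ 10 + 3 * X ^ 9 + 3 * X ^ 8 - 5 * X ^ 7 - 4 * X ^ 6 - 2 * X ^ 5 - 5 * X ^ 4 +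
      2 * X ^ 3 - 5 * X ^ 2 + 5 * X + 3)
    (d := X ^ 10 + 4 * X ^ 9 + 5 * X ^ 8 - 5 * X ^ 7 + 5 * X ^ 5 + 3 * X ^ 4 + 2 * X ^ 3 +
      3 * X ^ 2 - 2 * X + 1)
    ⟨-2 * X ^ 9 - 3 * X ^ 8 - 4 * X ^ 7 + 3 * X ^ 6 + X ^ 5 + 5 * X ^ 4 + X ^ 3 + 3 * X ^ 2 - 5, ?_⟩
    ⟨-4 * X ^ 19 + 5 * X ^ 18 + 4 * X ^ 17 + 3 * X ^ 16 - 4 * X ^ 15 + 4 * X ^ 14 - 4 * X ^ 13 +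
      4 * X ^ 12 - 4 * X ^ 11 - 5 * X ^ 10 - 4 * X ^ 9 + 5 * X ^ 8 + 3 * X ^ 7 - 2 * X ^ 6 +
      2 * X ^ 5 + 3 * X ^ 4 + X ^ 3 + 3 * X ^ 2 - X + 2, ?_⟩
    ⟨-3 * X ^ 19 + X ^ 17 - 2 * X ^ 16 + 3 * X ^ 15 + 3 * X ^ 14 + 2 * X ^ 13 + X ^ 12 + X ^ 11 -
      5 * X ^ 10 - X ^ 9 - 5 * X ^ 8 - 3 * X ^ 7 - 4 * X ^ 5 + 4 * X ^ 4 - 4 * X ^ 3 - 2 * X ^ 2 +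
      4 * X + 2, ?_⟩
  all_goals
    rw [fdeltaFactor, artinSchreierElement]
    grind

/-- The Galois group of `f_δ` over ℚ (the Galois group of its splitting field over ℚ)
is not a solvable group. -/
theorem gal_fdelta_not_solvable : ¬ IsSolvable fdeltaQ.Gal := by
  have : Fact (Nat.Prime 11) := ⟨by norm_num⟩
  have hsep : fdeltaQ.Separable := irreducible_fdeltaQ.separable
  have := isGalois_splittingField hsep
  have hdvd : 11 ∣ Nat.card fdeltaQ.Gal :=
    dvd_card_gal_of_artinSchreier monic_fdeltaMonic
      (splits_map_fdeltaMonic (SplittingField.splits fdeltaQ))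
      (by rw [degree_fdeltaFactor]; norm_num) fdeltaFactor_dvd_map_fdeltaMonic
      fdeltaFactor_dvd_artinSchreierElement_pow_sub
  apply not_isSolvable_gal_of_prime_dvd_card irreducible_fdeltaQ hsep hdvd
  all_goals
    rw [natDegree_fdeltaQ]
    norm_num
end
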